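/- arXiv:1211.1041 — 3 statements merged into one kernel-verified Lean document; each statement's English description precedes it below -/
import Mathlib

section
/- Let d < n ≤ m be positive integers and let L be a subset of a ground set of m points with |L| > (d/n)·m. If V is a set of n points chosen uniformly at random from the m points (without repetition), then the probability that V contains at least d+1 points of L is at least 1/(2n²m). -/
/-!
By double counting, `|V ∩ L|` has mean `n|L|/m`, which exceeds `d` by at least `1/m` because
`n|L| - dm` is a positive integer. Only the sets `V` with `|V ∩ L| > d` can push the mean above
`d`, each by at most `n - d`, so their proportion is at least `1/((n - d)m)`.
-/

open Finset

section ReverseMarkov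

variable {ι M : Type*} [AddCommGroup M] [LinearOrder M] [IsOrderedAddMonoid M]

lemma sum_sub_le_card_filter_lt_nsmul {s : Finset ι} {f : ι → M} {b : M} (d : M)
    (hfb : ∀ i ∈ s, f i ≤ b) :
    ∑ i ∈ s, (f i - d) ≤ #{i ∈ s | d < f i} • (b - d) := by
  rw [← sum_const, sum_filter]
  refine sum_le_sum fun i hi ↦ ?_
  split_ifs with hdi
  · exact sub_le_sub_right (hfb i hi) d
  · exact sub_nonpos.2 (not_lt.1 hdi)

end ReverseMarkov

lemma one_div_two_mul_sq_mul_le_one_div_sub_mul {d n : ℕ} (m : ℕ) (hdn : d < n) :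
    (1 : ℝ) / (2 * n ^ 2 * m) ≤ 1 / ((n - d) * m) := by
  have hnd : (0 : ℝ) < n - d := sub_pos.2 (by exact_mod_cast hdn)
  have hn : (1 : ℝ) ≤ n := by exact_mod_cast d.zero_le.trans_lt hdn
  have hsub : (n : ℝ) - d ≤ 2 * n ^ 2 :=
    calc (n : ℝ) - d ≤ n := sub_le_self _ d.cast_nonneg
      _ ≤ n ^ 2 := le_self_pow₀ hn two_ne_zero
      _ ≤ 2 * n ^ 2 := le_mul_of_one_le_left (sq_nonneg _) one_le_two
  simp only [← div_div _ _ (m : ℝ)]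
  gcongr

section RandomSubset

variable {α : Type*} [DecidableEq α] {s L : Finset α}

lemma card_mul_card_filter_mem_powersetCard (n : ℕ) {x : α} (hx : x ∈ s) :
    #s * #{V ∈ powersetCard n s | x ∈ V} = n * (#s).choose n := by
  obtain _ | n := n
  · simp
  have hcount : #{V ∈ powersetCard (n + 1) s | x ∈ V} = (#s - 1).choose n := by
    simpa using card_filter_powersetCard_subset {x} s (n + 1) (by simpa using hx) (by simp)
  obtain ⟨m, hm⟩ := Nat.exists_eq_add_one.2 (card_pos.2 ⟨x, hx⟩)
  rw [hcount, hm, Nat.add_sub_cancel, Nat.add_one_mul_choose_eq, mul_comm]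

lemma card_mul_sum_card_inter_powersetCard (n : ℕ) (hLs : L ⊆ s) :
    #s * ∑ V ∈ powersetCard n s, #(V ∩ L) = n * #L * (#s).choose n := by
  have hswap : ∑ V ∈ powersetCard n s, #(V ∩ L) = ∑ x ∈ L, #{V ∈ powersetCard n s | x ∈ V} := by
    simp_rw [inter_comm _ L, ← filter_mem_eq_inter]
    exact sum_card_bipartiteAbove_eq_sum_card_bipartiteBelow fun V x ↦ x ∈ V
  rw [hswap, mul_sum, sum_congr rfl fun x hx ↦ card_mul_card_filter_mem_powersetCard n (hLs hx),
    sum_const, smul_eq_mul]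
  ring

lemma sub_mul_choose_le_mul_card_filter_lt_card_inter {R : Type*} [CommRing R] [LinearOrder R]
    [IsStrictOrderedRing R] (n : ℕ) (d : R) (hLs : L ⊆ s) :
    (n * #L - d * #s) * (#s).choose n ≤
      (n - d) * #s * #{V ∈ powersetCard n s | d < (#(V ∩ L) : R)} := by
  have hmean : (#s : R) * ∑ V ∈ powersetCard n s, (#(V ∩ L) : R) = n * #L * (#s).choose n := by
    exact_mod_cast card_mul_sum_card_inter_powersetCard n hLs
  have hle : ∀ V ∈ powersetCard n s, (#(V ∩ L) : R) ≤ n := fun V hV ↦ by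
    exact_mod_cast (card_le_card inter_subset_left).trans (mem_powersetCard.1 hV).2.le
  calc (n * #L - d * #s) * ((#s).choose n : R)
      = #s * ∑ V ∈ powersetCard n s, (#(V ∩ L) - d : R) := by
        rw [sum_sub_distrib, sum_const, card_powersetCard, nsmul_eq_mul]
        linear_combination -hmean
    _ ≤ #s * (#{V ∈ powersetCard n s | d < (#(V ∩ L) : R)} • (n - d)) := by
        gcongr
        exact sum_sub_le_card_filter_lt_nsmul d hle
    _ = (n - d) * #s * #{V ∈ powersetCard n s | d < (#(V ∩ L) : R)} := by
        rw [nsmul_eq_mul]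
        ring

theorem stmt_0_general {d n : ℕ} (hdn : d < n) (hns : n ≤ #s) (hLs : L ⊆ s)
    (hL : (d : ℝ) / n * #s < #L) :
    (1 : ℝ) / ((n - d) * #s) ≤
      (#{V ∈ powersetCard n s | d + 1 ≤ #(V ∩ L)} : ℝ) / #(powersetCard n s) := by
  have hn : (0 : ℝ) < n := by exact_mod_cast d.zero_le.trans_lt hdn
  have hs : (0 : ℝ) < #s := hn.trans_le (by exact_mod_cast hns)
  have hnd : (0 : ℝ) < n - d := sub_pos.2 (by exact_mod_cast hdn)
  have hchoose : (0 : ℝ) < (#s).choose n := by exact_mod_cast Nat.choose_pos hns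
  have hexcess : (1 : ℝ) ≤ n * #L - d * #s := by
    rw [div_mul_eq_mul_div, div_lt_iff₀' hn] at hL
    rw [le_sub_iff_add_le']
    exact_mod_cast hL
  have hcount := sub_mul_choose_le_mul_card_filter_lt_card_inter n (d : ℝ) hLs
  simp only [Nat.cast_lt, ← Nat.add_one_le_iff] at hcount
  rw [card_powersetCard, div_le_div_iff₀ (by positivity) hchoose]
  calc (1 : ℝ) * (#s).choose n ≤ (n * #L - d * #s) * (#s).choose n := by gcongr
    _ ≤ (n - d) * #s * #{V ∈ powersetCard n s | d + 1 ≤ #(V ∩ L)} := hcount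
    _ = #{V ∈ powersetCard n s | d + 1 ≤ #(V ∩ L)} * ((n - d) * #s) := mul_comm _ _

end RandomSubset

/-- A ground set of `m` points, inliers `L`, with strictly more than `(d/n)·m` inliers.
A uniformly random `n`-element subset `V` contains at least `d+1` inliers with
probability at least `1/(2n²m)`.  The probability is the number of favorable
`n`-subsets divided by the total number of `n`-subsets. -/
theorem stmt_0 (d n m : ℕ) (hd : 0 < d) (hdn : d < n) (hnm : n ≤ m)
    (L : Finset (Fin m)) (hL : (d : ℝ) / n * m < (L.card : ℝ)) :
    (1 : ℝ) / (2 * n ^ 2 * m) ≤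
      (((Finset.powersetCard n (Finset.univ : Finset (Fin m))).filter
          (fun V => d + 1 ≤ (V ∩ L).card)).card : ℝ) /
        ((Finset.powersetCard n (Finset.univ : Finset (Fin m))).card : ℝ) := by
  refine (one_div_two_mul_sq_mul_le_one_div_sub_mul m hdn).trans ?_
  simpa using stmt_0_general hdn (by simpa using hnm) (subset_univ L) (by simpa using hL)
end

section
/- Let A = [u_1,…,u_m] be a real n×m matrix with m ≥ n and rank(A) = n. Then the function φ_A : ℝ^m → ℝ defined by φ_A(t) = log det(∑_{j=1}^m e^{t_j}·u_j u_jᵀ) is convex on ℝ^m. -/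
/-!
Write `w j` for the weight `exp (t j)`, and `n` for the number of rows of `A`. Multiplying `det` out
along both factors of `A * diagonal w * Aᵀ` gives the Cauchy–Binet formula
`n! * det (∑ j, w j • u j (u j)ᵀ) = ∑ f, det (A_f) ^ 2 * ∏ i, w (f i)`, where `A_f` has the columns
`u (f i)`. So the determinant is a combination of exponentials of linear forms in `t` with
nonnegative coefficients, one of which is positive because `A` has full rank, and the theorem
reduces to the convexity of log-sum-exp: `log (∑ c i * exp (g i x)) ≤ r` says that
`∑ c i * exp (g i x - r) ≤ 1`, so the epigraph is a sublevel set of a convex function.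
-/

open Matrix Set

section CauchyBinet

variable {n m R : Type*} [Fintype n] [Fintype m]

theorem mul_diagonal_mul_eq_sum_smul_vecMulVec {l k : Type*} [DecidableEq m] [CommSemiring R]
    (A : Matrix l m R) (w : m → R) (B : Matrix m k R) :
    A * diagonal w * B = ∑ j, w j • vecMulVec (A.col j) (B.row j) := by
  ext i k
  simp only [mul_apply (M := A * diagonal w), mul_diagonal, Matrix.sum_apply, Matrix.smul_apply,
    vecMulVec_apply, smul_eq_mul, col_apply, row_apply]
  exact Finset.sum_congr rfl fun j _ => by ring

variable [DecidableEq n]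

theorem det_mul_eq_sum_det_submatrix_mul_prod [CommRing R] (A : Matrix n m R) (B : Matrix m n R) :
    (A * B).det = ∑ f : n → m, (A.submatrix id f).det * ∏ i, B (f i) i := by
  classical
  simp only [det_apply', mul_apply, Finset.prod_univ_sum, Finset.mul_sum, Fintype.piFinset_univ,
    Finset.sum_mul, submatrix_apply, id]
  rw [Finset.sum_comm]
  simp only [Finset.prod_mul_distrib, mul_assoc]

/-- In contrast to the usual sum over subsets, every set of columns is counted once for each of its
enumerations, hence the factorial. -/
theorem factorial_card_mul_det_mul [CommRing R] (A : Matrix n m R) (B : Matrix m n R) :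
    ((Fintype.card n).factorial : R) * (A * B).det =
      ∑ f : n → m, (A.submatrix id f).det * (B.submatrix f id).det := by
  have sign_mul_sum (σ : Equiv.Perm n) :
      (Equiv.Perm.sign σ : R) * ∑ f : n → m, (A.submatrix id f).det * ∏ i, B (f i) (σ i) =
        (A * B).det := by
    have h := det_mul_eq_sum_det_submatrix_mul_prod A (B.submatrix id σ)
    simp only [submatrix_apply, id] at h
    rw [← h, show A * B.submatrix id σ = (A * B).submatrix id σ from rfl, det_permute',
      ← mul_assoc, ← Int.cast_mul, Int.units_coe_mul_self, Int.cast_one, one_mul]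
  calc ((Fintype.card n).factorial : R) * (A * B).det
      = ∑ _σ : Equiv.Perm n, (A * B).det := by
        rw [Finset.sum_const, Finset.card_univ, Fintype.card_perm, nsmul_eq_mul]
    _ = ∑ σ : Equiv.Perm n, (Equiv.Perm.sign σ : R) *
          ∑ f : n → m, (A.submatrix id f).det * ∏ i, B (f i) (σ i) := by
        simp only [sign_mul_sum]
    _ = ∑ f : n → m, (A.submatrix id f).det *
          ∑ σ : Equiv.Perm n, (Equiv.Perm.sign σ : R) * ∏ i, B (f i) (σ i) := by
        simp only [Finset.mul_sum, mul_left_comm]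
        exact Finset.sum_comm
    _ = ∑ f : n → m, (A.submatrix id f).det * (B.submatrix f id).det := by
        refine Finset.sum_congr rfl fun f _ => congrArg _ ?_
        rw [← det_transpose (B.submatrix f id), det_apply']
        rfl

theorem factorial_card_mul_det_sum_smul_vecMulVec [CommRing R] (A : Matrix n m R) (w : m → R) :
    ((Fintype.card n).factorial : R) * (∑ j, w j • vecMulVec (A.col j) (A.col j)).det =
      ∑ f : n → m, (A.submatrix id f).det ^ 2 * ∏ i, w (f i) := by
  classical
  have h := mul_diagonal_mul_eq_sum_smul_vecMulVec A w Aᵀ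
  rw [row_transpose] at h
  rw [← h, factorial_card_mul_det_mul]
  refine Finset.sum_congr rfl fun f _ => ?_
  have h_left : (A * diagonal w).submatrix id f = A.submatrix id f * diagonal (w ∘ f) := by
    ext i j
    simp only [submatrix_apply, mul_diagonal, id, Function.comp_apply]
  rw [h_left, det_mul, det_diagonal, ← transpose_submatrix, det_transpose]
  simp only [Function.comp_apply]
  ring

theorem exists_det_submatrix_ne_zero_of_rank_eq_card [Field R] {A : Matrix n m R}
    (hA : A.rank = Fintype.card n) : ∃ f : n → m, (A.submatrix id f).det ≠ 0 := by
  have h_surj : Function.Surjective A.mulVec := LinearMap.range_eq_top.mp <|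
    Submodule.eq_top_of_finrank_eq (S := LinearMap.range A.mulVecLin) <|
      hA.trans (Module.finrank_fintype_fun_eq_card R).symm
  obtain ⟨B, hB⟩ := mulVec_surjective_iff_exists_right_inverse.mp h_surj
  have h_sum : ∑ f : n → m, (A.submatrix id f).det * ∏ i, B (f i) i ≠ 0 := by
    rw [← det_mul_eq_sum_det_submatrix_mul_prod, hB, det_one]
    exact one_ne_zero
  obtain ⟨f, -, hf⟩ := Finset.exists_ne_zero_of_sum_ne_zero h_sum
  exact ⟨f, left_ne_zero_of_mul hf⟩

end CauchyBinet

section LogSumExp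

theorem convexOn_finsetSum {𝕜 E β ι : Type*} [Semiring 𝕜] [PartialOrder 𝕜] [AddCommMonoid E]
    [SMul 𝕜 E] [AddCommMonoid β] [PartialOrder β] [IsOrderedAddMonoid β] [Module 𝕜 β]
    {s : Set E} {u : Finset ι} {f : ι → E → β} (hs : Convex 𝕜 s)
    (hf : ∀ i ∈ u, ConvexOn 𝕜 s (f i)) : ConvexOn 𝕜 s fun x => ∑ i ∈ u, f i x := by
  refine ⟨hs, fun x hx y hy a b ha hb hab => ?_⟩
  rw [Finset.smul_sum, Finset.smul_sum, ← Finset.sum_add_distrib]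
  exact Finset.sum_le_sum fun i hi => (hf i hi).2 hx hy ha hb hab

variable {E : Type*} [AddCommGroup E] [Module ℝ E] {s : Set E}

theorem convexOn_exp_comp {g : E → ℝ} (hg : ConvexOn ℝ s g) :
    ConvexOn ℝ s fun x => Real.exp (g x) :=
  ⟨hg.1, fun _ hx _ hy _ _ ha hb hab => (Real.exp_le_exp.2 (hg.2 hx hy ha hb hab)).trans
    (convexOn_exp.2 (mem_univ _) (mem_univ _) ha hb hab)⟩

theorem convexOn_log_sum_mul_exp {ι : Type*} {u : Finset ι} {c : ι → ℝ} {g : ι → E → ℝ}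
    (hc : ∀ i ∈ u, 0 ≤ c i) (hc_pos : ∃ i ∈ u, 0 < c i) (hg : ∀ i ∈ u, ConvexOn ℝ s (g i)) :
    ConvexOn ℝ s fun x => Real.log (∑ i ∈ u, c i * Real.exp (g i x)) := by
  obtain ⟨k, hk, hck⟩ := hc_pos
  have h_pos (x : E) : 0 < ∑ i ∈ u, c i * Real.exp (g i x) :=
    Finset.sum_pos' (fun i hi => mul_nonneg (hc i hi) (Real.exp_pos _).le)
      ⟨k, hk, mul_pos hck (Real.exp_pos _)⟩
  have h_cyl : Convex ℝ (LinearMap.fst ℝ E ℝ ⁻¹' s) := (hg k hk).1.linear_preimage _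
  have h_shifted : ConvexOn ℝ (LinearMap.fst ℝ E ℝ ⁻¹' s)
      fun p => ∑ i ∈ u, c i * Real.exp (g i p.1 - p.2) :=
    convexOn_finsetSum h_cyl fun i hi => (convexOn_exp_comp <|
      ((hg i hi).comp_linearMap (LinearMap.fst ℝ E ℝ)).sub
        ((LinearMap.snd ℝ E ℝ).concaveOn h_cyl)).smul (hc i hi)
  refine convexOn_iff_convex_epigraph.mpr ?_
  convert h_shifted.convex_le 1 using 1
  ext ⟨x, r⟩
  refine and_congr_right fun _ => ?_
  simp only [Real.exp_sub, ← mul_div_assoc, ← Finset.sum_div]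
  rw [div_le_one (Real.exp_pos r), Real.log_le_iff_le_exp (h_pos x)]

end LogSumExp

theorem stmt_9_general {n m E : Type*} [Fintype n] [DecidableEq n] [Fintype m] [AddCommGroup E]
    [Module ℝ E] {s : Set E} (hs : Convex ℝ s) {g : m → E → ℝ} (hg : ∀ j, ConvexOn ℝ s (g j))
    {A : Matrix n m ℝ} (hA : A.rank = Fintype.card n) :
    ConvexOn ℝ s fun x =>
      Real.log (∑ j, Real.exp (g j x) • vecMulVec (A.col j) (A.col j)).det := by
  have h_factorial : (0 : ℝ) < (Fintype.card n).factorial := mod_cast Nat.factorial_pos _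
  have h_det (x : E) : (∑ j, Real.exp (g j x) • vecMulVec (A.col j) (A.col j)).det =
      ∑ f : n → m, (A.submatrix id f).det ^ 2 / (Fintype.card n).factorial *
        Real.exp (∑ i, g (f i) x) := by
    simp only [div_mul_eq_mul_div, ← Finset.sum_div, Real.exp_sum]
    rw [eq_div_iff h_factorial.ne', mul_comm, factorial_card_mul_det_sum_smul_vecMulVec]
  obtain ⟨f, hf⟩ := exists_det_submatrix_ne_zero_of_rank_eq_card hA
  simp only [h_det]
  exact convexOn_log_sum_mul_exp (fun _ _ => by positivity)
    ⟨f, Finset.mem_univ f, by positivity⟩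
    fun f _ => convexOn_finsetSum hs fun i _ => hg (f i)

/-- The function `φ_A(t) = log det(∑ⱼ e^{tⱼ} uⱼuⱼᵀ)` is convex on `ℝ^m`. -/
theorem stmt_9 (n m : ℕ) (hnm : n ≤ m) (A : Matrix (Fin n) (Fin m) ℝ)
    (hrank : A.rank = n) :
    ConvexOn ℝ Set.univ (fun t : Fin m → ℝ =>
      Real.log (Matrix.det (∑ j : Fin m,
        Real.exp (t j) • Matrix.vecMulVec (fun i => A i j) (fun i => A i j)))) :=
  stmt_9_general convex_univ
    (fun j => (LinearMap.proj (R := ℝ) (φ := fun _ : Fin m => ℝ) j).convexOn convex_univ)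
    (hrank.trans (Fintype.card_fin n).symm)
end

section
/- Let v_1,…,v_m ∈ ℝⁿ be unit vectors and let d ≤ n be a positive integer. Suppose there exists a linear subspace T ⊆ ℝⁿ with dim(T) = d such that strictly more than (d/n)·m of the vectors v_1,…,v_m lie in T. Then (n/m)·∑_{j=1}^m v_j v_jᵀ ≠ Id_n; in particular, the vectors cannot be in radial isotropic position with respect to the coefficient vector (n/m)·𝟏. -/
/-!
Let `P` be the orthogonal projection onto a subspace `S`. If `∑ⱼ cⱼ uⱼuⱼ* = Id` then
`P = ∑ⱼ cⱼ (P uⱼ)uⱼ*`, and taking traces gives `dim S = ∑ⱼ cⱼ ‖P uⱼ‖²`. With nonnegative weights,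
keeping only the terms with `uⱼ ∈ S`, where `P uⱼ = uⱼ`, shows that for unit vectors the weights
inside `S` add up to at most `dim S`.
-/

open Module InnerProductSpace

theorem trace_starProjection {𝕜 E : Type*} [RCLike 𝕜] [NormedAddCommGroup E]
    [InnerProductSpace 𝕜 E] [FiniteDimensional 𝕜 E] (S : Submodule 𝕜 E) :
    LinearMap.trace 𝕜 E S.starProjection = finrank 𝕜 S :=
  LinearMap.IsProj.trace
    ⟨S.starProjection_apply_mem, fun _ ↦ Submodule.starProjection_eq_self_iff.mpr⟩

/-- The family `u` resolves the identity with weights `c`, that is, `∑ⱼ cⱼ uⱼuⱼ* = Id`. For unit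
vectors this says that `u` is in radial isotropic position with respect to `c`; the normalization
of the vectors is kept separate. -/
def IsIsotropic (𝕜 : Type*) {E κ : Type*} [RCLike 𝕜] [NormedAddCommGroup E]
    [InnerProductSpace 𝕜 E] [Fintype κ] (c : κ → ℝ) (u : κ → E) : Prop :=
  ∑ j, (c j : 𝕜) • rankOne 𝕜 (u j) (u j) = ContinuousLinearMap.id 𝕜 E

namespace IsIsotropic

variable {𝕜 E κ : Type*} [RCLike 𝕜] [NormedAddCommGroup E] [InnerProductSpace 𝕜 E]
  [FiniteDimensional 𝕜 E] [Fintype κ] {c : κ → ℝ} {u : κ → E}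

theorem sum_mul_norm_starProjection_sq (h : IsIsotropic 𝕜 c u) (S : Submodule 𝕜 E) :
    ∑ j, c j * ‖S.starProjection (u j)‖ ^ 2 = finrank 𝕜 S := by
  have hproj : ∑ j, (c j : 𝕜) • rankOne 𝕜 (S.starProjection (u j)) (u j) = S.starProjection := by
    simpa only [ContinuousLinearMap.comp_finsetSum, ContinuousLinearMap.comp_smul, comp_rankOne,
      ContinuousLinearMap.comp_id] using congrArg (S.starProjection ∘L ·) h
  have htrace : ∑ j, (c j : 𝕜) * inner 𝕜 (u j) (S.starProjection (u j)) = finrank 𝕜 S := by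
    simpa only [ContinuousLinearMap.toLinearMap_sum, ContinuousLinearMap.toLinearMap_smul, map_sum,
      map_smul, trace_rankOne, smul_eq_mul, trace_starProjection] using
      congrArg (fun f : E →L[𝕜] E ↦ LinearMap.trace 𝕜 E f) hproj
  have hinner (x : E) : RCLike.re (inner 𝕜 x (S.starProjection x)) = ‖S.starProjection x‖ ^ 2 := by
    rw [inner_re_symm, S.re_inner_starProjection_eq_normSq, S.starProjection_apply,
      Submodule.coe_norm]
  simpa only [map_sum, RCLike.re_ofReal_mul, hinner, RCLike.natCast_re] using
    congrArg RCLike.re htrace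

open scoped Classical in
theorem sum_mul_norm_sq_le_finrank (h : IsIsotropic 𝕜 c u) (hc : ∀ j, 0 ≤ c j)
    (S : Submodule 𝕜 E) : ∑ j with u j ∈ S, c j * ‖u j‖ ^ 2 ≤ finrank 𝕜 S :=
  calc ∑ j with u j ∈ S, c j * ‖u j‖ ^ 2
      = ∑ j with u j ∈ S, c j * ‖S.starProjection (u j)‖ ^ 2 :=
        Finset.sum_congr rfl fun j hj ↦ by
          rw [Submodule.starProjection_eq_self_iff.mpr (Finset.mem_filter.mp hj).2]
    _ ≤ ∑ j, c j * ‖S.starProjection (u j)‖ ^ 2 :=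
        Finset.sum_le_univ_sum_of_nonneg fun j ↦ mul_nonneg (hc j) (sq_nonneg _)
    _ = finrank 𝕜 S := h.sum_mul_norm_starProjection_sq S

end IsIsotropic

theorem isIsotropic_toLp_iff {𝕜 ι κ : Type*} [RCLike 𝕜] [Fintype ι] [DecidableEq ι]
    [Fintype κ] {c : κ → ℝ} {v : κ → ι → 𝕜} :
    IsIsotropic 𝕜 c (fun j ↦ WithLp.toLp 2 (v j)) ↔
      ∑ j, (c j : 𝕜) • Matrix.vecMulVec (v j) (star (v j)) = 1 := by
  rw [IsIsotropic, ← ContinuousLinearMap.coe_inj, ← Matrix.toEuclideanLin.symm.injective.eq_iff]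
  simp only [ContinuousLinearMap.toLinearMap_sum, ContinuousLinearMap.toLinearMap_smul, map_sum,
    map_smul, symm_toEuclideanLin_rankOne, ContinuousLinearMap.coe_id, Matrix.toLpLin_symm_id]

open scoped Classical in
theorem lt_sum_div_card_of_div_mul_card_lt_ncard {κ : Type*} [Fintype κ] {s : Set κ} {a b : ℝ}
    (hb : 0 < b) (h : a / b * Fintype.card κ < s.ncard) :
    a < ∑ j with j ∈ s, b / Fintype.card κ := by
  cases isEmpty_or_nonempty κ
  · simp [Set.eq_empty_of_isEmpty] at h
  · rwa [Finset.sum_const, nsmul_eq_mul, ← Set.ncard_coe_finset, Finset.coe_filter_univ,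
      ← div_lt_iff₀ (by positivity), div_div_eq_mul_div, mul_div_right_comm]

open scoped Classical in
theorem stmt_16_general {𝕜 ι κ : Type*} [RCLike 𝕜] [Fintype ι] [DecidableEq ι] [Fintype κ]
    {c : κ → ℝ} (hc : ∀ j, 0 ≤ c j) {v : κ → ι → 𝕜} (hunit : ∀ j, ∑ i, ‖v j i‖ ^ 2 = 1)
    (T : Submodule 𝕜 (ι → 𝕜)) (hmany : (finrank 𝕜 T : ℝ) < ∑ j with v j ∈ T, c j) :
    ∑ j, (c j : 𝕜) • Matrix.vecMulVec (v j) (star (v j)) ≠ 1 := by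
  intro h
  let S : Submodule 𝕜 (EuclideanSpace 𝕜 ι) :=
    T.map (WithLp.linearEquiv 2 𝕜 (ι → 𝕜)).symm.toLinearMap
  have hfinrank : finrank 𝕜 S = finrank 𝕜 T := LinearEquiv.finrank_map_eq _ T
  have hmem (j : κ) : WithLp.toLp 2 (v j) ∈ S ↔ v j ∈ T := Submodule.mem_map_equiv T
  have hle := (isIsotropic_toLp_iff.mpr h).sum_mul_norm_sq_le_finrank hc S
  simp only [hmem, hfinrank, EuclideanSpace.norm_sq_eq, hunit, mul_one] at hle
  exact hmany.not_ge hle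

/-- If unit vectors `v₁,…,v_m` are such that strictly more than `(d/n)·m` of them lie in a
`d`-dimensional subspace `T`, then `(n/m)·∑ⱼ vⱼvⱼᵀ ≠ Id`, i.e. the vectors are not in
radial isotropic position with respect to the coefficient vector `(n/m)·𝟏`. -/
theorem stmt_16 (n m d : ℕ) (hd : 0 < d) (hdn : d ≤ n)
    (v : Fin m → (Fin n → ℝ)) (hunit : ∀ j, ∑ i, (v j i) ^ 2 = 1)
    (T : Submodule ℝ (Fin n → ℝ)) (hT : Module.finrank ℝ T = d)
    (hmany : (d : ℝ) / n * m < ({j : Fin m | v j ∈ T}.ncard : ℝ)) :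
    ((n : ℝ) / m) • (∑ j : Fin m, Matrix.vecMulVec (v j) (v j))
      ≠ (1 : Matrix (Fin n) (Fin n) ℝ) := by
  have hn : (0 : ℝ) < n := mod_cast hd.trans_le hdn
  have hweight := lt_sum_div_card_of_div_mul_card_lt_ncard hn (by rwa [Fintype.card_fin])
  rw [← hT] at hweight
  rw [Finset.smul_sum]
  exact stmt_16_general (𝕜 := ℝ) (c := fun _ ↦ n / m) (fun _ ↦ by positivity)
    (by simpa using hunit) T (by simpa using hweight)
end
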